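/- Let m = 1, X = [−1/2, 1/2] ⊂ ℝ, f ≡ 0, and C = {−1, 1}. Then: (i) for every c ∈ C and every d ≠ 0, with x*(d) = −sign(d)/2, the true loss satisfies L(d,c) = c·x*(d) − min_{x∈X} c·x = (c·sign(d) − 1)/2·(−1), i.e., L(d,c) = 0 if sign(d) = c and L(d,c) = 1 if sign(d) ≠ c (the 0-1 classification loss); (ii) for every c ∈ C and every d ∈ ℝ, the SPO+ loss satisfies ℓ_SPO+(d,c) := (2d−c)·(−c/2) − min_{x∈[−1/2,1/2]} (2d−c)·x = (|2d−c| − (2d−c)c)/2 = max{0, 1 − 2dc} (the hinge loss). -/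

import Mathlib

/-!
On `[-r, r]` the linear cost `x ↦ a * x` has minimum `-(|a| * r)`, so both losses are explicit
expressions in absolute values. The labels are the numbers of absolute value one: two of them are
equal or opposite, which gives the 0-1 loss, and multiplication by a label preserves absolute
values, so the SPO+ loss at `d` is the negative part of `(2 * d - c) * c = 2 * d * c - 1`.
-/

section OrderedRing

variable {R : Type*} [Ring R] [LinearOrder R]

theorem mul_self_eq_one_of_abs_eq_one {c : R} (hc : |c| = 1) : c * c = 1 := by
  rw [← abs_mul_abs_self, hc, one_mul]

theorem isLeast_image_mul_Icc_neg_self [IsOrderedRing R] (a : R) {r : R} (hr : 0 ≤ r) :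
    IsLeast ((fun x => a * x) '' Set.Icc (-r) r) (-(|a| * r)) := by
  constructor
  · rcases le_total 0 a with ha | ha
    · exact ⟨-r, ⟨le_rfl, neg_le_self hr⟩, by simp only [abs_of_nonneg ha, mul_neg]⟩
    · exact ⟨r, ⟨neg_le_self hr, le_rfl⟩, by simp only [abs_of_nonpos ha, neg_mul, neg_neg]⟩
  · rintro _ ⟨x, hx, rfl⟩
    have abs_cost_le : |a * x| ≤ |a| * r := by
      rw [abs_mul]
      exact mul_le_mul_of_nonneg_left (abs_le.mpr hx) (abs_nonneg a)
    exact neg_le_of_abs_le abs_cost_le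

end OrderedRing

theorem sInf_image_mul_Icc_neg_self (a : ℝ) {r : ℝ} (hr : 0 ≤ r) :
    sInf ((fun x => a * x) '' Set.Icc (-r) r) = -(|a| * r) :=
  (isLeast_image_mul_Icc_neg_self a hr).csInf_eq

section OrderedField

variable {K : Type*} [Field K] [LinearOrder K] [IsStrictOrderedRing K] {c : K}

theorem one_sub_mul_div_two_eq_ite_of_abs_eq_one {s : K} (hs : |s| = 1) (hc : |c| = 1) :
    (1 - c * s) / 2 = if s = c then 0 else 1 := by
  split_ifs with h
  · rw [h, mul_self_eq_one_of_abs_eq_one hc, sub_self, zero_div]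
  · have opposite : s = -c := (abs_eq_abs.mp (hs.trans hc.symm)).resolve_left h
    rw [opposite, mul_neg, mul_self_eq_one_of_abs_eq_one hc]
    norm_num

theorem abs_sub_self_div_two_eq_max (a : K) : (|a| - a) / 2 = max 0 (-a) := by
  rw [abs_sub_eq_two_nsmul_negPart, nsmul_eq_mul, Nat.cast_ofNat,
    mul_div_cancel_left₀ _ two_ne_zero, negPart_def, sup_comm]

theorem abs_sub_mul_div_two_eq_hinge_of_abs_eq_one (hc : |c| = 1) (d : K) :
    (|2 * d - c| - (2 * d - c) * c) / 2 = max 0 (1 - 2 * d * c) := by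
  have abs_mul_label : |(2 * d - c) * c| = |2 * d - c| := by rw [abs_mul, hc, mul_one]
  rw [← abs_mul_label, abs_sub_self_div_two_eq_max, sub_mul,
    mul_self_eq_one_of_abs_eq_one hc, neg_sub]

end OrderedField

theorem abs_realSign_of_ne_zero {d : ℝ} (hd : d ≠ 0) : |Real.sign d| = 1 := by
  rcases Real.sign_apply_eq_of_ne_zero d hd with h | h <;> simp [h]

/-- in the binary classification setting `X = [−1/2,1/2]`, `C = {−1,1}`,
`f ≡ 0`: (i) the true loss with `x*(d) = −sign(d)/2` (for `d ≠ 0`) is the 0-1 loss;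
(ii) the SPO+ loss equals `(|2d−c| − (2d−c)c)/2 = max{0, 1 − 2dc}` (the hinge loss). -/
theorem statement17 :
    (∀ c ∈ ({-1, 1} : Set ℝ), ∀ d : ℝ, d ≠ 0 →
      c * (-(Real.sign d) / 2) - sInf ((fun x => c * x) '' Set.Icc (-(1:ℝ)/2) (1/2))
        = if Real.sign d = c then 0 else 1) ∧
    (∀ c ∈ ({-1, 1} : Set ℝ), ∀ d : ℝ,
      ((2 * d - c) * (-c / 2) - sInf ((fun x => (2 * d - c) * x) '' Set.Icc (-(1:ℝ)/2) (1/2))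
          = (|2 * d - c| - (2 * d - c) * c) / 2) ∧
      ((2 * d - c) * (-c / 2) - sInf ((fun x => (2 * d - c) * x) '' Set.Icc (-(1:ℝ)/2) (1/2))
          = max 0 (1 - 2 * d * c))) := by
  have min_cost (a : ℝ) :
      sInf ((fun x => a * x) '' Set.Icc (-(1:ℝ)/2) (1/2)) = -(|a| * (1 / 2)) := by
    rw [neg_div]
    exact sInf_image_mul_Icc_neg_self a one_half_pos.le
  have abs_label {c : ℝ} (hc : c ∈ ({-1, 1} : Set ℝ)) : |c| = 1 :=
    (abs_eq zero_le_one).mpr hc.symm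
  have spoPlusLoss_eq (c d : ℝ) : (2 * d - c) * (-c / 2) - -(|2 * d - c| * (1 / 2))
      = (|2 * d - c| - (2 * d - c) * c) / 2 := by ring
  simp only [min_cost]
  refine ⟨fun c hc d hd => ?_, fun c hc d => ⟨spoPlusLoss_eq c d, ?_⟩⟩
  · rw [← one_sub_mul_div_two_eq_ite_of_abs_eq_one (abs_realSign_of_ne_zero hd) (abs_label hc),
      abs_label hc]
    ring
  · rw [spoPlusLoss_eq, abs_sub_mul_div_two_eq_hinge_of_abs_eq_one (abs_label hc)]
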